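/- Fix β > 0, R > 0 and C > 0. Then there exist positive constants c = c(C, R, β) and N = N(C, R, β) with the following property. Let n ≥ N, let x₀ ∈ [0,1], let (Ω, 𝓐) be a measurable space and (P_f : f ∈ 𝒞^β(R)) a family of probability measures on (Ω, 𝓐) whose squared Hellinger distances satisfy H(P_f, P_g)² = 1 − exp(−(n/8)·‖f − g‖_{L²([0,1])}²) for all f, g ∈ 𝒞^β(R), and let T : Ω → ℝ be any measurable estimator of f(x₀) that is integrable under every P_f, with Med_f(T) denoting a median of T under P_f. If sup_{f ∈ 𝒞^β(R)} |Med_f(T) − f(x₀)| < (C/n)^{β/(2β+1)}, then sup_{f ∈ 𝒞^β(R)} E_{P_f}[|T − Med_f(T)|] ≥ c·n^{−β/(2β+1)}. -/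

import Mathlib

open MeasureTheory ENNReal

/-- The squared Hellinger distance `H(P,Q)²` between two measures on the same
measurable space, defined via the densities with respect to the dominating measure `P + Q`. -/
noncomputable def sqHellinger {Ω : Type*} [MeasurableSpace Ω] (P Q : Measure Ω) : ℝ :=
  (1 / 2) * ∫ ω, (Real.sqrt ((P.rnDeriv (P + Q) ω).toReal)
    - Real.sqrt ((Q.rnDeriv (P + Q) ω).toReal)) ^ 2 ∂(P + Q)

/-- `⌊β⌋`: the largest integer strictly smaller than `β` (for `β > 0`). -/
noncomputable def lfloor (β : ℝ) : ℕ := ⌈β⌉₊ - 1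

/-- The `β`-Hölder norm of `f` on the domain `[0,1]`, valued in `ℝ≥0∞`:
the sum over `ℓ = 0, …, ⌊β⌋` of the sup-norms of the `ℓ`-th derivatives plus the
`(β - ⌊β⌋)`-Hölder seminorm of the `⌊β⌋`-th derivative. -/
noncomputable def holderNorm (β : ℝ) (f : ℝ → ℝ) : ℝ≥0∞ :=
  (∑ l ∈ Finset.range (lfloor β + 1),
      ⨆ x : Set.Icc (0:ℝ) 1, ENNReal.ofReal |iteratedDerivWithin l f (Set.Icc 0 1) x|)
    + ⨆ p : {y : Set.Icc (0:ℝ) 1 × Set.Icc (0:ℝ) 1 // (y.1 : ℝ) ≠ (y.2 : ℝ)},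
        ENNReal.ofReal
          (|iteratedDerivWithin (lfloor β) f (Set.Icc 0 1) p.1.1
              - iteratedDerivWithin (lfloor β) f (Set.Icc 0 1) p.1.2|
            / |(p.1.1 : ℝ) - (p.1.2 : ℝ)| ^ (β - (lfloor β : ℝ)))

/-- The ball `𝒞^β(R)` of `β`-Hölder smooth functions on `[0,1]` with radius `R`. -/
def holderBall (β R : ℝ) : Set (ℝ → ℝ) :=
  {f | ContDiffOn ℝ (lfloor β) f (Set.Icc 0 1) ∧ holderNorm β f ≤ ENNReal.ofReal R}

/-!
Two-point argument. Compare the zero function with a bump of height `4 (C / n)^(β/(2β+1))` at `x₀`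
and width of order `n^(-1/(2β+1))`. The bump lies in the Hölder ball, and its squared `L²`-norm is
of order `1 / n`, so the Hellinger affinity of the two laws stays bounded away from zero. By
Cauchy–Schwarz their common mass `P ⊓ Q` is then bounded below, while the small bias keeps the two
centres of `T` apart by the order of the height. Against the common mass, `T` cannot be close to
both centres.
-/

section Hellinger

variable {Ω : Type*} [MeasurableSpace Ω]

lemma sq_integral_sqrt_mul_sqrt_le {μ : Measure Ω} {f g : Ω → ℝ} (hf₀ : 0 ≤ f) (hg₀ : 0 ≤ g)
    (hf : Integrable f μ) (hg : Integrable g μ) :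
    (∫ ω, √(f ω) * √(g ω) ∂μ) ^ 2 ≤ (∫ ω, f ω ∂μ) * ∫ ω, g ω ∂μ := by
  have memLp_sqrt {u : Ω → ℝ} (hu₀ : 0 ≤ u) (hu : Integrable u μ) :
      MemLp (fun ω => √(u ω)) (ENNReal.ofReal 2) μ := by
    have h_meas := hu.1.aemeasurable.sqrt.aestronglyMeasurable
    rw [ENNReal.ofReal_ofNat, memLp_two_iff_integrable_sq h_meas]
    simpa only [Real.sq_sqrt (hu₀ _)] using hu
  have cauchy_schwarz := integral_mul_le_Lp_mul_Lq_of_nonneg Real.HolderConjugate.two_two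
    (ae_of_all μ fun ω => Real.sqrt_nonneg (f ω)) (ae_of_all μ fun ω => Real.sqrt_nonneg (g ω))
    (memLp_sqrt hf₀ hf) (memLp_sqrt hg₀ hg)
  simp only [Real.rpow_two, Real.sq_sqrt (hf₀ _), Real.sq_sqrt (hg₀ _), ← Real.sqrt_eq_rpow]
    at cauchy_schwarz
  calc (∫ ω, √(f ω) * √(g ω) ∂μ) ^ 2
      ≤ (√(∫ ω, f ω ∂μ) * √(∫ ω, g ω ∂μ)) ^ 2 :=
        pow_le_pow_left₀ (integral_nonneg fun ω => by positivity) cauchy_schwarz 2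
    _ = (∫ ω, f ω ∂μ) * ∫ ω, g ω ∂μ := by
        rw [mul_pow, Real.sq_sqrt (integral_nonneg hf₀), Real.sq_sqrt (integral_nonneg hg₀)]

lemma sq_integral_sqrt_mul_sqrt_le_min_mul_add {μ : Measure Ω} {f g : Ω → ℝ} (hf₀ : 0 ≤ f)
    (hg₀ : 0 ≤ g) (hf : Integrable f μ) (hg : Integrable g μ) :
    (∫ ω, √(f ω) * √(g ω) ∂μ) ^ 2
      ≤ (∫ ω, min (f ω) (g ω) ∂μ) * (∫ ω, f ω ∂μ + ∫ ω, g ω ∂μ) := by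
  have h_min : 0 ≤ fun ω => min (f ω) (g ω) := fun ω => le_min (hf₀ ω) (hg₀ ω)
  have h_max : 0 ≤ fun ω => max (f ω) (g ω) := fun ω => le_max_of_le_left (hf₀ ω)
  calc (∫ ω, √(f ω) * √(g ω) ∂μ) ^ 2
      = (∫ ω, √(min (f ω) (g ω)) * √(max (f ω) (g ω)) ∂μ) ^ 2 := by
        simp only [← Real.sqrt_mul (hf₀ _), ← Real.sqrt_mul (h_min _), min_mul_max]
    _ ≤ (∫ ω, min (f ω) (g ω) ∂μ) * ∫ ω, max (f ω) (g ω) ∂μ :=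
        sq_integral_sqrt_mul_sqrt_le h_min h_max (hf.inf hg) (hf.sup hg)
    _ ≤ (∫ ω, min (f ω) (g ω) ∂μ) * ∫ ω, (f ω + g ω) ∂μ := by
        refine mul_le_mul_of_nonneg_left ?_ (integral_nonneg h_min)
        exact integral_mono (hf.sup hg) (hf.add hg) fun ω => max_le_add_of_nonneg (hf₀ ω) (hg₀ ω)
    _ = _ := by rw [integral_add hf hg]

lemma integral_sq_sqrt_sub_sqrt {μ : Measure Ω} {f g : Ω → ℝ} (hf₀ : 0 ≤ f) (hg₀ : 0 ≤ g)
    (hf : Integrable f μ) (hg : Integrable g μ) :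
    ∫ ω, (√(f ω) - √(g ω)) ^ 2 ∂μ
      = ∫ ω, f ω ∂μ + ∫ ω, g ω ∂μ - 2 * ∫ ω, √(f ω) * √(g ω) ∂μ := by
  have h_prod : Integrable (fun ω => √(f ω) * √(g ω)) μ := by
    refine (hf.add hg).mono' (by fun_prop) (ae_of_all μ fun ω => ?_)
    rw [Real.norm_of_nonneg (by positivity), Pi.add_apply]
    nlinarith [Real.sq_sqrt (hf₀ ω), Real.sq_sqrt (hg₀ ω), sq_nonneg (√(f ω) - √(g ω)),
      hf₀ ω, hg₀ ω]
  calc ∫ ω, (√(f ω) - √(g ω)) ^ 2 ∂μ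
      = ∫ ω, (f ω + g ω - 2 * (√(f ω) * √(g ω))) ∂μ := by
        refine integral_congr_ae (ae_of_all μ fun ω => ?_)
        linear_combination Real.sq_sqrt (hf₀ ω) + Real.sq_sqrt (hg₀ ω)
    _ = _ := by
        rw [integral_sub (hf.fun_add hg) (h_prod.const_mul 2), integral_add hf hg,
          integral_const_mul]

lemma integral_min_rnDeriv_le_measureReal_inf (P Q : Measure Ω) [IsFiniteMeasure P]
    [SigmaFinite Q] :
    ∫ ω, min (P.rnDeriv (P + Q) ω).toReal (Q.rnDeriv (P + Q) ω).toReal ∂(P + Q)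
      ≤ (P ⊓ Q).real Set.univ := by
  set p := P.rnDeriv (P + Q)
  set q := Q.rnDeriv (P + Q)
  have hp_top : ∀ᵐ ω ∂(P + Q), p ω ≠ ∞ := P.rnDeriv_ne_top (P + Q)
  have hq_top : ∀ᵐ ω ∂(P + Q), q ω ≠ ∞ := Q.rnDeriv_ne_top (P + Q)
  have h_le_inf : (P + Q).withDensity (fun ω => min (p ω) (q ω)) ≤ P ⊓ Q := by
    refine le_inf ?_ ?_
    · calc _ ≤ (P + Q).withDensity p :=
            withDensity_mono (ae_of_all _ fun ω => min_le_left (p ω) (q ω))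
        _ ≤ P := Measure.withDensity_rnDeriv_le P (P + Q)
    · calc _ ≤ (P + Q).withDensity q :=
            withDensity_mono (ae_of_all _ fun ω => min_le_right (p ω) (q ω))
        _ ≤ Q := Measure.withDensity_rnDeriv_le Q (P + Q)
  have : IsFiniteMeasure (P ⊓ Q) := isFiniteMeasure_of_le P inf_le_left
  calc ∫ ω, min (p ω).toReal (q ω).toReal ∂(P + Q)
      = ∫ ω, (min (p ω) (q ω)).toReal ∂(P + Q) := by
        refine integral_congr_ae ?_
        filter_upwards [hp_top, hq_top] with ω hpω hqω
        exact (ENNReal.toReal_min hpω hqω).symm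
    _ = ((P + Q).withDensity fun ω => min (p ω) (q ω)).real Set.univ := by
        rw [measureReal_def, withDensity_apply _ MeasurableSet.univ, setLIntegral_univ,
          integral_toReal (by fun_prop)]
        filter_upwards [hp_top] with ω hpω
        exact (min_le_left _ _).trans_lt hpω.lt_top
    _ ≤ (P ⊓ Q).real Set.univ :=
        ENNReal.toReal_mono (measure_ne_top _ _) (h_le_inf _)

/-- Le Cam's inequality; `(P ⊓ Q).real univ` is one minus the total variation distance. -/
lemma sq_one_sub_sqHellinger_le (P Q : Measure Ω) [IsProbabilityMeasure P]
    [IsProbabilityMeasure Q] :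
    (1 - sqHellinger P Q) ^ 2 ≤ 2 * (P ⊓ Q).real Set.univ := by
  set p : Ω → ℝ := fun ω => (P.rnDeriv (P + Q) ω).toReal
  set q : Ω → ℝ := fun ω => (Q.rnDeriv (P + Q) ω).toReal
  have hp₀ : 0 ≤ p := fun ω => ENNReal.toReal_nonneg
  have hq₀ : 0 ≤ q := fun ω => ENNReal.toReal_nonneg
  have hp_int : Integrable p (P + Q) := Measure.integrable_toReal_rnDeriv
  have hq_int : Integrable q (P + Q) := Measure.integrable_toReal_rnDeriv
  have hp_one : ∫ ω, p ω ∂(P + Q) = 1 := by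
    have hP : P ≪ P + Q := Measure.AbsolutelyContinuous.rfl.add_right Q
    rw [Measure.integral_toReal_rnDeriv hP, probReal_univ]
  have hq_one : ∫ ω, q ω ∂(P + Q) = 1 := by
    have hQ : Q ≪ P + Q := add_comm Q P ▸ Measure.AbsolutelyContinuous.rfl.add_right P
    rw [Measure.integral_toReal_rnDeriv hQ, probReal_univ]
  have h_affinity : 1 - sqHellinger P Q = ∫ ω, √(p ω) * √(q ω) ∂(P + Q) := by
    rw [sqHellinger, integral_sq_sqrt_sub_sqrt hp₀ hq₀ hp_int hq_int, hp_one, hq_one]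
    ring
  calc (1 - sqHellinger P Q) ^ 2
      ≤ (∫ ω, min (p ω) (q ω) ∂(P + Q)) * (1 + 1) := by
        rw [h_affinity]
        simpa only [hp_one, hq_one] using
          sq_integral_sqrt_mul_sqrt_le_min_mul_add hp₀ hq₀ hp_int hq_int
    _ ≤ 2 * (P ⊓ Q).real Set.univ := by
        linarith [integral_min_rnDeriv_le_measureReal_inf P Q]

variable {E : Type*} [NormedAddCommGroup E] {T : Ω → E} {P Q : Measure Ω}

lemma measureReal_inf_mul_norm_sub_le [IsFiniteMeasure P] {a b : E}
    (hP : Integrable (fun ω => T ω - a) P) (hQ : Integrable (fun ω => T ω - b) Q) :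
    (P ⊓ Q).real Set.univ * ‖a - b‖ ≤ ∫ ω, ‖T ω - a‖ ∂P + ∫ ω, ‖T ω - b‖ ∂Q := by
  have : IsFiniteMeasure (P ⊓ Q) := isFiniteMeasure_of_le P inf_le_left
  have hP_inf := (hP.mono_measure (inf_le_left : P ⊓ Q ≤ P)).norm
  have hQ_inf := (hQ.mono_measure (inf_le_right : P ⊓ Q ≤ Q)).norm
  calc (P ⊓ Q).real Set.univ * ‖a - b‖ = ∫ _, ‖a - b‖ ∂(P ⊓ Q) := by
        rw [integral_const, smul_eq_mul]
    _ ≤ ∫ ω, (‖T ω - a‖ + ‖T ω - b‖) ∂(P ⊓ Q) :=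
        integral_mono (integrable_const _) (hP_inf.add hQ_inf) fun ω => by
          simpa only [norm_sub_rev a] using norm_sub_le_norm_sub_add_norm_sub a (T ω) b
    _ = ∫ ω, ‖T ω - a‖ ∂(P ⊓ Q) + ∫ ω, ‖T ω - b‖ ∂(P ⊓ Q) := integral_add hP_inf hQ_inf
    _ ≤ ∫ ω, ‖T ω - a‖ ∂P + ∫ ω, ‖T ω - b‖ ∂Q :=
        add_le_add
          (integral_mono_measure inf_le_left (ae_of_all _ fun ω => norm_nonneg _) hP.norm)
          (integral_mono_measure inf_le_right (ae_of_all _ fun ω => norm_nonneg _) hQ.norm)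

lemma sq_div_four_mul_norm_sub_le_max_integral [IsProbabilityMeasure P] [IsProbabilityMeasure Q]
    {ρ : ℝ} (hρ : 0 ≤ ρ) (h : sqHellinger P Q ≤ 1 - ρ) (hP : Integrable T P)
    (hQ : Integrable T Q) (a b : E) :
    ρ ^ 2 / 4 * ‖a - b‖ ≤ max (∫ ω, ‖T ω - a‖ ∂P) (∫ ω, ‖T ω - b‖ ∂Q) := by
  have h_inf : ρ ^ 2 / 2 ≤ (P ⊓ Q).real Set.univ := by
    have : ρ ^ 2 ≤ (1 - sqHellinger P Q) ^ 2 := pow_le_pow_left₀ hρ (by linarith) 2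
    linarith [sq_one_sub_sqHellinger_le P Q]
  have h_sum : ρ ^ 2 / 2 * ‖a - b‖ ≤ ∫ ω, ‖T ω - a‖ ∂P + ∫ ω, ‖T ω - b‖ ∂Q :=
    calc ρ ^ 2 / 2 * ‖a - b‖ ≤ (P ⊓ Q).real Set.univ * ‖a - b‖ := by gcongr
      _ ≤ _ := measureReal_inf_mul_norm_sub_le (hP.sub (integrable_const a))
          (hQ.sub (integrable_const b))
  linarith [le_max_left (∫ ω, ‖T ω - a‖ ∂P) (∫ ω, ‖T ω - b‖ ∂Q),
    le_max_right (∫ ω, ‖T ω - a‖ ∂P) (∫ ω, ‖T ω - b‖ ∂Q)]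

end Hellinger

section Holder

lemma natCast_lfloor_lt {β : ℝ} (hβ : 0 < β) : (lfloor β : ℝ) < β := by
  rw [lfloor, ← Nat.lt_ceil]
  exact Nat.sub_lt (Nat.ceil_pos.2 hβ) one_pos

lemma sub_natCast_lfloor_le_one (β : ℝ) : β - lfloor β ≤ 1 := by
  rw [sub_le_iff_le_add, ← Nat.cast_one, ← Nat.cast_add, ← Nat.ceil_le, lfloor]
  exact le_add_tsub

lemma holderNorm_le_of_abs_iteratedDeriv_le {β L : ℝ} {f : ℝ → ℝ} {B : ℕ → ℝ}
    (hf : ContDiff ℝ (lfloor β) f) (hL : 0 ≤ L)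
    (hB : ∀ l ≤ lfloor β, ∀ x ∈ Set.Icc (0 : ℝ) 1, |iteratedDeriv l f x| ≤ B l)
    (h_holder : ∀ x ∈ Set.Icc (0 : ℝ) 1, ∀ y ∈ Set.Icc (0 : ℝ) 1,
      |iteratedDeriv (lfloor β) f x - iteratedDeriv (lfloor β) f y|
        ≤ L * |x - y| ^ (β - lfloor β)) :
    holderNorm β f ≤ ENNReal.ofReal (∑ l ∈ Finset.range (lfloor β + 1), B l + L) := by
  have h_within {l : ℕ} (hl : l ≤ lfloor β) (x : Set.Icc (0 : ℝ) 1) :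
      iteratedDerivWithin l f (Set.Icc 0 1) x = iteratedDeriv l f x :=
    iteratedDerivWithin_eq_iteratedDeriv (uniqueDiffOn_Icc one_pos)
      (hf.of_le (by exact_mod_cast hl)).contDiffAt x.2
  have hB₀ {l : ℕ} (hl : l ∈ Finset.range (lfloor β + 1)) : 0 ≤ B l :=
    (abs_nonneg _).trans (hB l (Finset.mem_range_succ_iff.1 hl) 0 unitInterval.zero_mem)
  rw [ENNReal.ofReal_add (Finset.sum_nonneg fun l => hB₀) hL,
    ENNReal.ofReal_sum_of_nonneg fun l => hB₀]
  refine add_le_add (Finset.sum_le_sum fun l hl => iSup_le fun x => ?_) (iSup_le fun p => ?_)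
  · have hl := Finset.mem_range_succ_iff.1 hl
    rw [h_within hl]
    exact ENNReal.ofReal_le_ofReal (hB l hl x x.2)
  · rw [h_within le_rfl, h_within le_rfl]
    have h_dist : 0 < |(p.1.1 : ℝ) - p.1.2| := abs_pos.2 (sub_ne_zero.2 p.2)
    refine ENNReal.ofReal_le_ofReal ?_
    exact (div_le_iff₀ (Real.rpow_pos_of_pos h_dist _)).2 (h_holder _ p.1.1.2 _ p.1.2.2)

lemma zero_mem_holderBall (β R : ℝ) : (0 : ℝ → ℝ) ∈ holderBall β R := by
  refine ⟨contDiffOn_const, ?_⟩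
  simp [holderNorm]

end Holder

section Rescale

/-- The function `x ↦ A φ((x - x₀) / h)`: the profile `φ` moved to `x₀`, with amplitude `A` and
bandwidth `h`. -/
noncomputable def rescale (A h x₀ : ℝ) (φ : ℝ → ℝ) : ℝ → ℝ :=
  fun x => A * φ (h⁻¹ * (x - x₀))

variable {h : ℝ} {φ : ℝ → ℝ}

lemma rescale_apply_center (A h x₀ : ℝ) (φ : ℝ → ℝ) : rescale A h x₀ φ x₀ = A * φ 0 := by
  rw [rescale, sub_self, mul_zero]

lemma contDiff_rescale {k : WithTop ℕ∞} (hφ : ContDiff ℝ k φ) (A h x₀ : ℝ) :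
    ContDiff ℝ k (rescale A h x₀ φ) := by
  unfold rescale
  fun_prop

lemma iteratedDeriv_rescale {l : ℕ} (hφ : ContDiff ℝ l φ) (A h x₀ x : ℝ) :
    iteratedDeriv l (rescale A h x₀ φ) x
      = A * (h⁻¹ ^ l * iteratedDeriv l φ (h⁻¹ * (x - x₀))) := by
  unfold rescale
  rw [iteratedDeriv_const_mul_field,
    congrFun (iteratedDeriv_comp_sub_const l (fun y => φ (h⁻¹ * y)) x₀) x,
    iteratedDeriv_comp_const_mul hφ]

lemma integral_sq_rescale (A : ℝ) (hh : 0 ≤ h) (x₀ : ℝ) (φ : ℝ → ℝ) :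
    ∫ x, rescale A h x₀ φ x ^ 2 = A ^ 2 * h * ∫ x, φ x ^ 2 := by
  simp only [rescale, mul_pow]
  rw [integral_const_mul, integral_sub_right_eq_self (fun x => φ (h⁻¹ * x) ^ 2) x₀,
    Measure.integral_comp_mul_left (fun x => φ x ^ 2) h⁻¹, inv_inv, abs_of_nonneg hh,
    smul_eq_mul, mul_assoc]

lemma integrable_sq_rescale (A : ℝ) (hh : h ≠ 0) (x₀ : ℝ)
    (hφ : Integrable fun x => φ x ^ 2) : Integrable fun x => rescale A h x₀ φ x ^ 2 := by
  simp only [rescale, mul_pow]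
  exact ((hφ.comp_mul_left' (inv_ne_zero hh)).comp_sub_right x₀).const_mul (A ^ 2)

lemma setIntegral_sq_rescale_le (A : ℝ) (hh : 0 < h) (x₀ : ℝ)
    (hφ : Integrable fun x => φ x ^ 2) (s : Set ℝ) :
    ∫ x in s, rescale A h x₀ φ x ^ 2 ≤ A ^ 2 * h * ∫ x, φ x ^ 2 :=
  (setIntegral_le_integral (integrable_sq_rescale A hh.ne' x₀ hφ)
    (ae_of_all _ fun _ => sq_nonneg _)).trans_eq (integral_sq_rescale A hh.le x₀ φ)

lemma holderNorm_rescale_le {β L A : ℝ} {B : ℕ → ℝ} (hβ : 0 < β)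
    (hφ : ContDiff ℝ (lfloor β) φ) (hL : 0 ≤ L)
    (hB : ∀ l ≤ lfloor β, ∀ x, |iteratedDeriv l φ x| ≤ B l)
    (h_holder : ∀ x y, |iteratedDeriv (lfloor β) φ x - iteratedDeriv (lfloor β) φ y|
      ≤ L * |x - y| ^ (β - lfloor β))
    (hA : 0 ≤ A) (hh : 0 < h) (hh₁ : h ≤ 1) (x₀ : ℝ) :
    holderNorm β (rescale A h x₀ φ)
      ≤ ENNReal.ofReal (A * h ^ (-β) * (∑ l ∈ Finset.range (lfloor β + 1), B l + L)) := by
  rw [mul_add, Finset.mul_sum]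
  refine holderNorm_le_of_abs_iteratedDeriv_le (contDiff_rescale hφ A h x₀) (by positivity) ?_ ?_
  · intro l hl x _
    have h_pow : h⁻¹ ^ l ≤ h ^ (-β) := by
      rw [inv_pow, ← Real.rpow_natCast, ← Real.rpow_neg hh.le]
      have : (l : ℝ) ≤ lfloor β := by exact_mod_cast hl
      exact Real.rpow_le_rpow_of_exponent_ge hh hh₁ (by linarith [natCast_lfloor_lt hβ])
    rw [iteratedDeriv_rescale (hφ.of_le (by exact_mod_cast hl)), abs_mul, abs_mul,
      abs_of_nonneg hA, abs_of_nonneg (by positivity), mul_assoc]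
    gcongr
    exact hB l hl _
  · intro x _ y _
    have h_pow : h⁻¹ ^ lfloor β * h⁻¹ ^ (β - lfloor β) = h ^ (-β) := by
      rw [← Real.rpow_natCast, ← Real.rpow_add (inv_pos.2 hh), add_sub_cancel,
        Real.inv_rpow hh.le, Real.rpow_neg hh.le]
    have h_args : |h⁻¹ * (x - x₀) - h⁻¹ * (y - x₀)| = h⁻¹ * |x - y| := by
      rw [← mul_sub, sub_sub_sub_cancel_right, abs_mul, abs_of_pos (inv_pos.2 hh)]
    rw [iteratedDeriv_rescale hφ, iteratedDeriv_rescale hφ, ← mul_sub, ← mul_sub, abs_mul, abs_mul,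
      abs_of_nonneg hA, abs_of_nonneg (by positivity)]
    calc A * (h⁻¹ ^ lfloor β * |iteratedDeriv (lfloor β) φ (h⁻¹ * (x - x₀))
            - iteratedDeriv (lfloor β) φ (h⁻¹ * (y - x₀))|)
        ≤ A * (h⁻¹ ^ lfloor β * (L * (h⁻¹ * |x - y|) ^ (β - lfloor β))) := by
          gcongr
          simpa only [h_args] using h_holder (h⁻¹ * (x - x₀)) (h⁻¹ * (y - x₀))
      _ = A * (h⁻¹ ^ lfloor β * h⁻¹ ^ (β - lfloor β)) * L * |x - y| ^ (β - lfloor β) := by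
          rw [Real.mul_rpow (by positivity) (abs_nonneg _)]
          ring
      _ = A * h ^ (-β) * L * |x - y| ^ (β - lfloor β) := by rw [h_pow]

end Rescale

section CompactSupport

open scoped NNReal ContDiff

lemma exists_holderWith_of_hasCompactSupport {E F : Type*} [NormedAddCommGroup E]
    [NormedSpace ℝ E] [NormedAddCommGroup F] [NormedSpace ℝ F] {f : E → F}
    (hf : ContDiff ℝ 1 f) (hf_supp : HasCompactSupport f) {γ : ℝ≥0} (hγ : γ ≤ 1) :
    ∃ L, HolderWith L γ f := by
  obtain ⟨K, hK⟩ := hf.lipschitzWith_of_hasCompactSupport hf_supp one_ne_zero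
  obtain ⟨D, hD⟩ := Metric.isBounded_iff.1 (hf_supp.isCompact_range hf.continuous).isBounded
  have h_zero : HolderWith D.toNNReal 0 f := fun x y => by
    rw [NNReal.coe_zero, ENNReal.rpow_zero, mul_one, edist_dist]
    exact ENNReal.ofReal_le_ofReal (hD ⟨x, rfl⟩ ⟨y, rfl⟩)
  exact ⟨_, h_zero.of_le_of_le (holderWith_one.2 hK) zero_le hγ⟩

section IteratedDeriv

variable {𝕜 F : Type*} [NontriviallyNormedField 𝕜] [NormedAddCommGroup F] [NormedSpace 𝕜 F]
  {φ : 𝕜 → F}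

lemma hasCompactSupport_iteratedDeriv (hφ : HasCompactSupport φ) :
    ∀ l : ℕ, HasCompactSupport (iteratedDeriv l φ)
  | 0 => by rwa [iteratedDeriv_zero]
  | l + 1 => by
    rw [iteratedDeriv_succ]
    exact (hasCompactSupport_iteratedDeriv hφ l).deriv

lemma contDiff_iteratedDeriv (hφ : ContDiff 𝕜 ∞ φ) (l : ℕ) :
    ContDiff 𝕜 ∞ (iteratedDeriv l φ) := by
  rw [iteratedDeriv_eq_iterate]
  exact hφ.iterate_deriv l

end IteratedDeriv

lemma exists_holderNorm_rescale_le {β : ℝ} (hβ : 0 < β) {φ : ℝ → ℝ} (hφ : ContDiff ℝ ∞ φ)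
    (hφ_supp : HasCompactSupport φ) :
    ∃ S, 0 < S ∧ ∀ A h x₀, 0 ≤ A → 0 < h → h ≤ 1 →
      holderNorm β (rescale A h x₀ φ) ≤ ENNReal.ofReal (A * h ^ (-β) * S) := by
  choose B hB using fun l => (hasCompactSupport_iteratedDeriv hφ_supp l).exists_bound_of_continuous
    (contDiff_iteratedDeriv hφ l).continuous
  have hγ₀ : 0 ≤ β - lfloor β := sub_nonneg.2 (natCast_lfloor_lt hβ).le
  obtain ⟨L, hL⟩ := exists_holderWith_of_hasCompactSupport (γ := ⟨β - lfloor β, hγ₀⟩)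
    ((contDiff_iteratedDeriv hφ (lfloor β)).of_le (by exact_mod_cast le_top))
    (hasCompactSupport_iteratedDeriv hφ_supp (lfloor β)) (sub_natCast_lfloor_le_one β)
  have hB₀ : 0 ≤ ∑ l ∈ Finset.range (lfloor β + 1), B l :=
    Finset.sum_nonneg fun l _ => (norm_nonneg _).trans (hB l 0)
  refine ⟨∑ l ∈ Finset.range (lfloor β + 1), B l + (L + 1 : ℝ≥0), by positivity,
    fun A h x₀ hA hh hh₁ => ?_⟩
  refine holderNorm_rescale_le hβ (hφ.of_le (by exact_mod_cast le_top)) (by positivity)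
    (fun l _ => hB l) (fun x y => ?_) hA hh hh₁ x₀
  exact (hL.mono (le_add_of_nonneg_right zero_le_one)).dist_le x y

end CompactSupport

section LocalAlternative

lemma mul_rpow_neg_one_div_le_one {K n s : ℝ} (hK : 0 < K) (hs : 0 < s) (hn : K ^ s ≤ n) :
    K * n ^ (-(1 / s)) ≤ 1 := by
  have hn₀ : 0 < n := (Real.rpow_pos_of_pos hK s).trans_le hn
  rw [Real.rpow_neg hn₀.le, ← div_eq_mul_inv, div_le_one (Real.rpow_pos_of_pos hn₀ _), one_div]
  exact (Real.le_rpow_inv_iff_of_pos hK.le hn₀.le hs).2 hn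

lemma mul_sq_rpow_mul_rpow_eq_one {n β : ℝ} (hn : 0 < n) (hβ : 2 * β + 1 ≠ 0) :
    n * (n ^ (-(β / (2 * β + 1)))) ^ 2 * n ^ (-(1 / (2 * β + 1))) = 1 := by
  have h_exp : 1 + -(β / (2 * β + 1)) * (2 : ℕ) + -(1 / (2 * β + 1)) = 0 := by
    rw [Nat.cast_ofNat]
    linear_combination -div_self hβ
  nth_rewrite 1 [← Real.rpow_one n]
  rw [← Real.rpow_mul_natCast hn.le, ← Real.rpow_add hn, ← Real.rpow_add hn, h_exp,
    Real.rpow_zero]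

/-- With amplitude `A = a n^(-β/(2β+1))`, membership in the ball forces a bandwidth `h` with
`h ^ β ≳ A`; the choice `h ≍ n^(-1/(2β+1))` meets this and makes `n A² h` constant. -/
lemma exists_mem_holderBall_apply_eq_mul_rpow {β R a : ℝ} (hβ : 0 < β) (hR : 0 < R)
    (ha : 0 < a) :
    ∃ D N : ℝ, 0 < N ∧ ∀ n, N ≤ n → ∀ x₀, ∃ g ∈ holderBall β R,
      g x₀ = a * n ^ (-(β / (2 * β + 1))) ∧ n * ∫ x in Set.Icc (0 : ℝ) 1, g x ^ 2 ≤ D := by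
  let φ : ContDiffBump (0 : ℝ) := default
  have hφ_zero : φ 0 = 1 := φ.one_of_mem_closedBall (Metric.mem_closedBall_self φ.rIn_pos.le)
  have hφ_sq : Integrable fun x => φ x ^ 2 :=
    (φ.continuous.memLp_of_hasCompactSupport φ.hasCompactSupport).integrable_sq
  obtain ⟨S, hS, h_norm⟩ := exists_holderNorm_rescale_le hβ φ.contDiff φ.hasCompactSupport
  set K : ℝ := (a * S / R) ^ β⁻¹ with hK
  have hK₀ : 0 < K := by positivity
  refine ⟨a ^ 2 * K * ∫ x, φ x ^ 2, K ^ (2 * β + 1), by positivity, fun n hn x₀ => ?_⟩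
  have hn₀ : 0 < n := (Real.rpow_pos_of_pos hK₀ _).trans_le hn
  set A : ℝ := a * n ^ (-(β / (2 * β + 1))) with hA
  set h : ℝ := K * n ^ (-(1 / (2 * β + 1))) with hh
  have hh₀ : 0 < h := by positivity
  have hh₁ : h ≤ 1 := mul_rpow_neg_one_div_le_one hK₀ (by positivity) hn
  have h_radius : A * h ^ (-β) * S = R := by
    have h_rpow : h ^ β = a * S / R * n ^ (-(β / (2 * β + 1))) := by
      rw [hh, Real.mul_rpow hK₀.le (by positivity), hK, Real.rpow_inv_rpow (by positivity) hβ.ne',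
        ← Real.rpow_mul hn₀.le, neg_mul, one_div_mul_eq_div]
    rw [Real.rpow_neg hh₀.le, h_rpow, hA]
    field_simp
  refine ⟨rescale A h x₀ φ, ⟨(contDiff_rescale φ.contDiff A h x₀).contDiffOn, ?_⟩, ?_, ?_⟩
  · exact h_radius ▸ h_norm A h x₀ (by positivity) hh₀ hh₁
  · rw [rescale_apply_center, hφ_zero, mul_one]
  · calc n * ∫ x in Set.Icc (0 : ℝ) 1, rescale A h x₀ φ x ^ 2
        ≤ n * (A ^ 2 * h * ∫ x, φ x ^ 2) := by
          gcongr
          exact setIntegral_sq_rescale_le A hh₀ x₀ hφ_sq _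
      _ = a ^ 2 * K * (∫ x, φ x ^ 2)
            * (n * (n ^ (-(β / (2 * β + 1)))) ^ 2 * n ^ (-(1 / (2 * β + 1)))) := by
          rw [hA, hh]
          ring
      _ = a ^ 2 * K * ∫ x, φ x ^ 2 := by
          rw [mul_sq_rpow_mul_rpow_eq_one hn₀ (by positivity), mul_one]

end LocalAlternative

lemma two_mul_le_abs_sub_of_abs_le {a b δ : ℝ} (ha : |a| ≤ δ) (hb : |b - 4 * δ| ≤ δ) :
    2 * δ ≤ |a - b| := by
  rw [abs_le] at ha hb
  exact le_abs'.2 (Or.inl (by linarith [ha.2, hb.1]))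

universe u

theorem stmt14_general (β R C : ℝ) (hβ : 0 < β) (hR : 0 < R) (hC : 0 < C) :
    ∃ c N : ℝ, 0 < c ∧ 0 < N ∧
      ∀ n : ℝ, N ≤ n →
        ∀ x₀ ∈ Set.Icc (0 : ℝ) 1,
          ∀ (Ω : Type u) (_ : MeasurableSpace Ω) (P : (ℝ → ℝ) → Measure Ω),
            (∀ f ∈ holderBall β R, IsProbabilityMeasure (P f)) →
            (∀ f ∈ holderBall β R, ∀ g ∈ holderBall β R,
              sqHellinger (P f) (P g)
                ≤ 1 - Real.exp (-(n / 8) * ∫ x in Set.Icc (0 : ℝ) 1, (f x - g x) ^ 2)) →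
            ∀ T : Ω → ℝ, (∀ f ∈ holderBall β R, Integrable T (P f)) →
              ∀ m : (ℝ → ℝ) → ℝ,
                (∀ f ∈ holderBall β R, |m f - f x₀| ≤ (C / n) ^ (β / (2 * β + 1))) →
                ∃ f ∈ holderBall β R,
                  c * n ^ (-(β / (2 * β + 1))) ≤ ∫ ω, |T ω - m f| ∂(P f) := by
  set e : ℝ := β / (2 * β + 1)
  obtain ⟨D, N, hN, h_alt⟩ :=
    exists_mem_holderBall_apply_eq_mul_rpow (a := 4 * C ^ e) hβ hR (by positivity)
  refine ⟨Real.exp (-(D / 8)) ^ 2 * C ^ e / 2, N, by positivity, hN, ?_⟩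
  intro n hn x₀ _ Ω _ P hP hH T hT m hm
  have hn₀ : 0 < n := hN.trans_le hn
  have h0 := zero_mem_holderBall β R
  obtain ⟨g, hg, hg_x₀, hg_sq⟩ := h_alt n hn x₀
  have := hP 0 h0
  have := hP g hg
  have h_hellinger : sqHellinger (P 0) (P g) ≤ 1 - Real.exp (-(D / 8)) := by
    refine (hH 0 h0 g hg).trans (sub_le_sub_left (Real.exp_le_exp.2 ?_) 1)
    simp only [Pi.zero_apply, zero_sub, neg_sq]
    linarith
  have h_sep : 2 * (C ^ e * n ^ (-e)) ≤ |m 0 - m g| := by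
    have h_bias : (C / n) ^ e = C ^ e * n ^ (-e) := by
      rw [Real.div_rpow hC.le hn₀.le, Real.rpow_neg hn₀.le, div_eq_mul_inv]
    refine two_mul_le_abs_sub_of_abs_le ?_ ?_
    · simpa only [Pi.zero_apply, sub_zero, h_bias] using hm 0 h0
    · simpa only [hg_x₀, mul_assoc, h_bias] using hm g hg
  have h_two_point : Real.exp (-(D / 8)) ^ 2 / 4 * |m 0 - m g|
      ≤ max (∫ ω, |T ω - m 0| ∂(P 0)) (∫ ω, |T ω - m g| ∂(P g)) :=
    sq_div_four_mul_norm_sub_le_max_integral (Real.exp_pos _).le h_hellinger (hT 0 h0) (hT g hg)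
      (m 0) (m g)
  have h_rate : Real.exp (-(D / 8)) ^ 2 * C ^ e / 2 * n ^ (-e)
      ≤ max (∫ ω, |T ω - m 0| ∂(P 0)) (∫ ω, |T ω - m g| ∂(P g)) :=
    calc _ = Real.exp (-(D / 8)) ^ 2 / 4 * (2 * (C ^ e * n ^ (-e))) := by ring
      _ ≤ Real.exp (-(D / 8)) ^ 2 / 4 * |m 0 - m g| := by gcongr
      _ ≤ _ := h_two_point
  rcases le_max_iff.1 h_rate with h_zero | h_bump
  · exact ⟨0, h0, h_zero⟩
  · exact ⟨g, hg, h_bump⟩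

/- `Med f` is a median of `T` under `P f`; the suprema over the Hölder ball in the
hypothesis and the conclusion are formalized pointwise resp. existentially. -/
theorem stmt14 (β R C : ℝ) (hβ : 0 < β) (hR : 0 < R) (hC : 0 < C) :
    ∃ c N : ℝ, 0 < c ∧ 0 < N ∧
      ∀ (n : ℝ), N ≤ n →
        ∀ x₀ ∈ Set.Icc (0:ℝ) 1,
          ∀ (Ω : Type) (_ : MeasurableSpace Ω) (P : (ℝ → ℝ) → Measure Ω),
            (∀ f ∈ holderBall β R, IsProbabilityMeasure (P f)) →
            (∀ f ∈ holderBall β R, ∀ g ∈ holderBall β R,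
              sqHellinger (P f) (P g)
                = 1 - Real.exp (-(n / 8) * ∫ x in Set.Icc (0:ℝ) 1, (f x - g x) ^ 2)) →
            ∀ T : Ω → ℝ, Measurable T →
              (∀ f ∈ holderBall β R, Integrable T (P f)) →
              ∀ Med : (ℝ → ℝ) → ℝ,
                (∀ f ∈ holderBall β R,
                  (1 / 2 : ℝ≥0∞) ≤ P f {ω | T ω ≤ Med f}
                    ∧ (1 / 2 : ℝ≥0∞) ≤ P f {ω | Med f ≤ T ω}) →
                (∀ f ∈ holderBall β R,
                  |Med f - f x₀| < (C / n) ^ (β / (2 * β + 1))) →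
                ∃ f ∈ holderBall β R,
                  c * n ^ (-(β / (2 * β + 1))) ≤ ∫ ω, |T ω - Med f| ∂(P f) := by
  obtain ⟨c, N, hc, hN, h⟩ := stmt14_general β R C hβ hR hC
  exact ⟨c, N, hc, hN, fun n hn x₀ hx₀ Ω _ P hP hH T _ hT Med _ hMed =>
    h n hn x₀ hx₀ Ω _ P hP (fun f hf g hg => (hH f hf g hg).le) T hT Med
      fun f hf => (hMed f hf).le⟩
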